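/- Let k be an algebraic closure of 𝔽₂ and K = k(t) the rational function field over k. The group of points of the Weierstrass curve W : y² + xy + (t²+t)²y = x³ + (t²+t)²x² over K is isomorphic, as an abelian group, to ℤ ⊕ ℤ/8ℤ. -/

import Mathlib

/-- An algebraic closure `k` of `𝔽₂`. -/
noncomputable abbrev k : Type := AlgebraicClosure (ZMod 2)

/-- The rational function field `K = k(t)`. -/
noncomputable abbrev K : Type := RatFunc k

/-- The variable `t` of `K = k(t)`. -/
noncomputable def t : K := RatFunc.X

/-- The Weierstrass curve `W : y² + xy + (t²+t)²y = x³ + (t²+t)²x²` over `K`. -/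
noncomputable def W : WeierstrassCurve.Affine K :=
  { a₁ := 1, a₂ := (t ^ 2 + t) ^ 2, a₃ := (t ^ 2 + t) ^ 2, a₄ := 0, a₆ := 0 }

namespace ECTwo

open WeierstrassCurve Polynomial

section curve

variable {F : Type*} [Field F]

/-- The curve `y² + xy = x³ + b`. -/
def E (b : F) : WeierstrassCurve.Affine F :=
  { a₁ := 1, a₂ := 0, a₃ := 0, a₄ := 0, a₆ := b }

lemma eqn_iff (b x y : F) : (E b).Equation x y ↔ y ^ 2 + x * y = x ^ 3 + b := by
  rw [WeierstrassCurve.Affine.equation_iff]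
  simp [E]

variable [CharP F 2]

lemma nons_iff {b : F} (hb : b ≠ 0) (x y : F) :
    (E b).Nonsingular x y ↔ y ^ 2 + x * y = x ^ 3 + b := by
  rw [WeierstrassCurve.Affine.nonsingular_iff, eqn_iff]
  simp only [E]
  constructor
  · exact fun h => h.1
  · intro h
    refine ⟨h, ?_⟩
    by_contra hcon
    push Not at hcon
    grind

/-- Affine point of `E b`. -/
def pt {b : F} (hb : b ≠ 0) (x y : F) (h : y ^ 2 + x * y = x ^ 3 + b) : (E b).Point :=
  .some x y ((nons_iff hb x y).2 h)

lemma pt_ne_zero {b : F} (hb : b ≠ 0) (x y : F) (h : y ^ 2 + x * y = x ^ 3 + b) :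
    pt hb x y h ≠ 0 := WeierstrassCurve.Affine.Point.some_ne_zero _

lemma pt_inj {b : F} {hb : b ≠ 0} {x y x' y' : F} {h : y ^ 2 + x * y = x ^ 3 + b}
    {h' : y' ^ 2 + x' * y' = x' ^ 3 + b} (e : pt hb x y h = pt hb x' y' h') : x = x' ∧ y = y' := by
  unfold pt at e
  simpa using e

lemma pt_congr {b : F} {hb : b ≠ 0} {x y x' y' : F} {h : y ^ 2 + x * y = x ^ 3 + b}
    (hx : x = x') (hy : y = y') :
    pt hb x y h = pt hb x' y' (by rw [← hx, ← hy]; exact h) := by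
  subst hx hy; rfl

lemma pt_cases {b : F} (hb : b ≠ 0) (P : (E b).Point) :
    P = 0 ∨ ∃ x y h, P = pt hb x y h := by
  rcases P with _ | ⟨x, y, h⟩
  · left; rfl
  · right; exact ⟨x, y, (nons_iff hb x y).1 h, rfl⟩

lemma neg_pt {b : F} (hb : b ≠ 0) (x y : F) (h : y ^ 2 + x * y = x ^ 3 + b) :
    -pt hb x y h = pt hb x (y + x) (by grind) := by
  unfold pt
  rw [WeierstrassCurve.Affine.Point.neg_some]
  simp only [WeierstrassCurve.Affine.negY, E]
  grind

lemma pt_eq_or_neg {b : F} {hb : b ≠ 0} {x y y' : F} {h : y ^ 2 + x * y = x ^ 3 + b}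
    {h' : y' ^ 2 + x * y' = x ^ 3 + b} :
    pt hb x y h = pt hb x y' h' ∨ pt hb x y h = - pt hb x y' h' := by
  have : y = y' ∨ y = y' + x := by grind
  rcases this with e | e
  · left; exact pt_congr rfl e
  · right; rw [neg_pt]; exact pt_congr rfl e

variable [DecidableEq F]

lemma add_pt {b : F} {hb : b ≠ 0} {x y x' y' : F} {h : y ^ 2 + x * y = x ^ 3 + b}
    {h' : y' ^ 2 + x' * y' = x' ^ 3 + b} (hx : x ≠ x') :
    ∃ x3 y3 h3, pt hb x y h + pt hb x' y' h' = pt hb x3 y3 h3 ∧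
      x3 = ((y + y') / (x + x')) ^ 2 + (y + y') / (x + x') + x + x' := by
  have e := WeierstrassCurve.Affine.Point.add_of_X_ne (h₁ := (nons_iff hb x y).2 h)
    (h₂ := (nons_iff hb x' y').2 h') hx
  refine ⟨_, _, (nons_iff hb _ _).1 (WeierstrassCurve.Affine.nonsingular_add
    ((nons_iff hb x y).2 h) ((nons_iff hb x' y').2 h') fun hxy => hx hxy.left), e, ?_⟩
  rw [WeierstrassCurve.Affine.slope_of_X_ne hx]
  simp only [WeierstrassCurve.Affine.addX, E]
  have : x - x' ≠ 0 := sub_ne_zero.2 hx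
  have : x + x' ≠ 0 := by grind
  grind

lemma dbl_pt {b : F} {hb : b ≠ 0} {x y : F} {h : y ^ 2 + x * y = x ^ 3 + b} (hx : x ≠ 0) :
    ∃ x3 y3 h3, pt hb x y h + pt hb x y h = pt hb x3 y3 h3 ∧
      x3 = x ^ 2 + b / x ^ 2 ∧ y3 = x ^ 2 + (x + y / x + 1) * x3 := by
  have hy : y ≠ (E b).negY x y := by
    simp only [WeierstrassCurve.Affine.negY, E]
    grind
  have e := WeierstrassCurve.Affine.Point.add_self_of_Y_ne (h₁ := (nons_iff hb x y).2 h) hy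
  refine ⟨_, _, (nons_iff hb _ _).1 (WeierstrassCurve.Affine.nonsingular_add
    ((nons_iff hb x y).2 h) ((nons_iff hb x y).2 h) fun hxy => hy hxy.2), e, ?_⟩
  have hs : (E b).slope x x y y = x + y / x := by
    rw [WeierstrassCurve.Affine.slope_of_Y_ne rfl hy]
    simp only [WeierstrassCurve.Affine.negY, E]
    have : y - (-y - 1 * x - 0) = x := by grind
    rw [this]
    grind
  rw [hs]
  simp only [WeierstrassCurve.Affine.addX, WeierstrassCurve.Affine.addY,
    WeierstrassCurve.Affine.negAddY, WeierstrassCurve.Affine.negY, E]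
  constructor
  · grind
  · grind

lemma dbl_pt_zero {b : F} {hb : b ≠ 0} {y : F} {h : y ^ 2 + 0 * y = 0 ^ 3 + b} :
    pt hb 0 y h + pt hb 0 y h = 0 := by
  apply WeierstrassCurve.Affine.Point.add_self_of_Y_eq
  simp only [WeierstrassCurve.Affine.negY, E]
  grind

/-- Frobenius. -/
noncomputable def Fr (b : F) : (E b).Point →+ (E (b ^ 2)).Point :=
  let f := frobenius F 2
  have hW : (E b).map f = E (b ^ 2) := by
    ext <;> simp [E, f, frobenius_def, WeierstrassCurve.map]
  { toFun := fun P => match P with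
      | 0 => 0
      | .some x y h => .some (f x) (f y) (hW ▸ ((E b).map_nonsingular f.injective x y).2 h)
    map_zero' := rfl
    map_add' := by
      rintro (_ | ⟨x₁, y₁, h₁⟩) (_ | ⟨x₂, y₂, h₂⟩)
      any_goals rfl
      by_cases hxy : x₁ = x₂ ∧ y₁ = (E b).negY x₂ y₂
      · rw [Affine.Point.add_of_Y_eq hxy.left hxy.right,
          Affine.Point.add_of_Y_eq (congr_arg f hxy.left) <| by
            rw [hxy.right, ← hW, Affine.map_negY]]
      · have hxy' : ¬ (f x₁ = f x₂ ∧ f y₁ = (E (b ^ 2)).negY (f x₂) (f y₂)) := by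
          rw [← hW, Affine.map_negY]
          exact fun h => hxy ⟨f.injective h.1, f.injective h.2⟩
        rw [Affine.Point.add_some hxy, Affine.Point.add_some hxy']
        simp only [← hW, Affine.map_slope, Affine.map_addX, Affine.map_addY] }

lemma Fr_pt {b : F} (hb : b ≠ 0) (x y : F) (h : y ^ 2 + x * y = x ^ 3 + b) :
    Fr b (pt hb x y h) = pt (pow_ne_zero 2 hb) (x ^ 2) (y ^ 2) (by grind) := rfl

lemma Fr_inj {b : F} (hb : b ≠ 0) : Function.Injective (Fr b) := by
  rw [injective_iff_map_eq_zero]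
  intro P hP
  rcases pt_cases hb P with h | ⟨x, y, h, rfl⟩
  · exact h
  · rw [Fr_pt] at hP
    exact absurd hP (pt_ne_zero _ _ _ _)

/-- Point of `E (b²)` with square abscissa comes from Frobenius. -/
lemma mem_Fr {b : F} (hb : b ≠ 0) {x y : F} (h : y ^ 2 + x * y = x ^ 3 + b ^ 2)
    (u : F) (hu : u ≠ 0) (hx : x = u ^ 2) :
    ∃ P : (E b).Point, pt (pow_ne_zero 2 hb) x y h = Fr b P := by
  refine ⟨pt hb u ((y + u ^ 3 + b) / u) ?_, ?_⟩
  · field_simp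
    grind
  · rw [Fr_pt]
    apply pt_congr hx
    subst hx
    field_simp
    grind

lemma alg_prod (b x y x' y' : F) (hs : x + x' ≠ 0) (h : y ^ 2 + x * y = x ^ 3 + b ^ 2)
    (h' : y' ^ 2 + x' * y' = x' ^ 3 + b ^ 2) :
    x * x' * (((y + y') / (x + x')) ^ 2 + (y + y') / (x + x') + x + x') =
      (y + x * ((y + y') / (x + x')) + b) ^ 2 := by grind

lemma alg_x3 (b x y x' y' : F) (hs : x + x' ≠ 0) (h : y ^ 2 + x * y = x ^ 3 + b)
    (h' : y' ^ 2 + x' * y' = x' ^ 3 + b) :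
    (((y + y') / (x + x')) ^ 2 + (y + y') / (x + x') + x + x') * (x + x') ^ 2 =
      x * y' + x' * y + x * x' * (x + x') := by
  field_simp
  grind

lemma alg_prod2 (b x y x' y' z w : F) (hs : x + x' ≠ 0) (h : y ^ 2 + x * y = x ^ 3 + b)
    (h' : y' ^ 2 + x' * y' = x' ^ 3 + b)
    (hz : z * (x + x') ^ 2 = x * y' + x' * y + x * x' * (x + x'))
    (hw : w * (x + x') ^ 2 = x * (y' + x') + x' * y + x * x' * (x + x')) :
    z * w * (x + x') ^ 2 = x ^ 2 * x' ^ 2 + b := by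
  have h4 : (x + x') ^ 2 ≠ 0 := pow_ne_zero _ hs
  apply mul_right_cancel₀ h4
  have : z * w * (x + x') ^ 2 * (x + x') ^ 2 = (z * (x + x') ^ 2) * (w * (x + x') ^ 2) := by ring
  rw [this, hz, hw]
  clear this hz hw h4 hs
  grind

/-- Descent by adding a point in the same square class. -/
lemma mem_Fr_add {b : F} (hb : b ≠ 0) {x y x' y' : F} {h : y ^ 2 + x * y = x ^ 3 + b ^ 2}
    {h' : y' ^ 2 + x' * y' = x' ^ 3 + b ^ 2} (hx' : x' ≠ 0)
    (u : F) (hu0 : u ≠ 0) (hu : x = x' * u ^ 2) :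
    (∃ P : (E b).Point, pt (pow_ne_zero 2 hb) x y h + pt (pow_ne_zero 2 hb) x' y' h' = Fr b P) ∨
    pt (pow_ne_zero 2 hb) x y h = pt (pow_ne_zero 2 hb) x' y' h' ∨
    pt (pow_ne_zero 2 hb) x y h + pt (pow_ne_zero 2 hb) x' y' h' =
      pt (pow_ne_zero 2 hb) 0 b (by ring) := by
  by_cases hxx : x = x'
  · subst hxx
    rcases pt_eq_or_neg (hb := pow_ne_zero 2 hb) (h := h) (h' := h') with e | e
    · right; left; exact e
    · left; exact ⟨0, by rw [e]; simp⟩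
  · obtain ⟨x3, y3, h3, e, ex⟩ := add_pt (hb := pow_ne_zero 2 hb) (h := h) (h' := h') hxx
    rw [e]
    by_cases hx3 : x3 = 0
    · right; right
      exact pt_congr hx3 (by subst hx3; grind)
    · left
      have hs : x + x' ≠ 0 := by clear * - hxx; grind
      have key : x * x' * x3 = (y + x * ((y + y') / (x + x')) + b) ^ 2 := by
        rw [ex]; exact alg_prod b x y x' y' hs h h'
      have key2 : x3 = ((y + x * ((y + y') / (x + x')) + b) / (x' * u)) ^ 2 := by
        rw [div_pow, ← key]
        rw [eq_div_iff (pow_ne_zero 2 (mul_ne_zero hx' hu0))]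
        rw [hu]; ring
      refine mem_Fr hb h3 _ ?_ key2
      intro h0
      rw [h0] at key2
      exact hx3 (by rw [key2]; ring)

/-- Adding the two-torsion point. -/
lemma add_T {b : F} (hb : b ≠ 0) {x y : F} {h : y ^ 2 + x * y = x ^ 3 + b ^ 2} (hx : x ≠ 0) :
    ∃ y3 h3, pt (pow_ne_zero 2 hb) x y h + pt (pow_ne_zero 2 hb) 0 b (by ring) =
      pt (pow_ne_zero 2 hb) (b / x) y3 h3 := by
  obtain ⟨x3, y3, h3, e, ex⟩ := add_pt (hb := pow_ne_zero 2 hb) (h := h)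
    (h' := (by ring : b ^ 2 + 0 * b = 0 ^ 3 + b ^ 2)) hx
  have : x3 = b / x := by rw [ex]; clear * - h hx; field_simp; grind
  subst this
  exact ⟨y3, h3, e⟩

/-- Sum and product of abscissas of `P + Q` and `P - Q`. -/
lemma add_sub_pt {b : F} {hb : b ≠ 0} {x y x' y' : F} {h : y ^ 2 + x * y = x ^ 3 + b}
    {h' : y' ^ 2 + x' * y' = x' ^ 3 + b} (hx : x ≠ x') :
    ∃ x3 y3 h3 x4 y4 h4, pt hb x y h + pt hb x' y' h' = pt hb x3 y3 h3 ∧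
      pt hb x y h - pt hb x' y' h' = pt hb x4 y4 h4 ∧
      (x3 + x4) * (x + x') ^ 2 = x * x' ∧ x3 * x4 * (x + x') ^ 2 = x ^ 2 * x' ^ 2 + b := by
  obtain ⟨x3, y3, h3, e, ex⟩ := add_pt (hb := hb) (h := h) (h' := h') hx
  have h'' : (y' + x') ^ 2 + x' * (y' + x') = x' ^ 3 + b := by grind
  obtain ⟨x4, y4, h4, e', ex'⟩ := add_pt (hb := hb) (h := h) (h' := h'') hx
  refine ⟨x3, y3, h3, x4, y4, h4, e, ?_, ?_, ?_⟩
  · rw [sub_eq_add_neg, neg_pt, e']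
  all_goals
    have hs : x + x' ≠ 0 := by clear * - hx; grind
    have a1 := alg_x3 b x y x' y' hs h h'
    have a2 := alg_x3 b x y x' (y' + x') hs h h''
    rw [← ex] at a1
    rw [← ex'] at a2
  · rw [add_mul, a1, a2]; clear * -; grind
  · exact alg_prod2 b x y x' y' x3 x4 hs h h' a1 a2

lemma halve {s : F} (hs : s ≠ 0) {x y : F} (h : y ^ 2 + x * y = x ^ 3 + s) (hx : x ≠ 0)
    (z : F) (hz : z ^ 2 + s = x * z) :
    ∃ Q : (E (s ^ 2)).Point, Q + Q = Fr s (pt hs x y h) := by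
  have hz0 : z ≠ 0 := by
    rintro rfl
    apply hs; simpa using hz
  have h1 : (z * (1 + x + (y + z) / x + z)) ^ 2 + z * (z * (1 + x + (y + z) / x + z))
      = z ^ 3 + s ^ 2 := by
    field_simp
    grind
  refine ⟨pt (pow_ne_zero 2 hs) z (z * (1 + x + (y + z) / x + z)) h1, ?_⟩
  obtain ⟨x3, y3, h3, e, e1, e2⟩ := dbl_pt (hb := pow_ne_zero 2 hs) (h := h1) hz0
  have hx3 : x3 = x ^ 2 := by
    rw [e1]
    field_simp
    grind
  rw [e, Fr_pt]
  apply pt_congr hx3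
  rw [e2, hx3]
  field_simp
  grind

end curve

section poly

variable {κ : Type*} [Field κ] [IsAlgClosed κ] [CharP κ 2]

lemma exists_sqrt (c : κ) : ∃ e : κ, e ^ 2 = c := by
  obtain ⟨e, he⟩ := IsAlgClosed.exists_pow_nat_eq c (n := 2) (by norm_num)
  exact ⟨e, he⟩

lemma exists_as (c : κ) : ∃ e : κ, e ^ 2 + e = c := by
  have hd : (X ^ 2 + X + C c : κ[X]).degree ≠ 0 := by
    have : (X ^ 2 + X + C c : κ[X]).degree = 2 := by compute_degree!
    rw [this]; norm_num
  obtain ⟨e, he⟩ := IsAlgClosed.exists_root (X ^ 2 + X + C c : κ[X]) hd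
  refine ⟨e, ?_⟩
  simp [IsRoot] at he
  grind

lemma two_poly : (2 : κ[X]) = 0 := CharTwo.two_eq_zero

lemma sqclass (n : ℕ) : ∀ p w z : κ[X], p.natDegree ≤ n → p ≠ 0 → p * w = z ^ 2 →
    (∀ a, p.IsRoot a → w.IsRoot a → a = 0 ∨ a = 1) →
    ∃ u : κ[X], p = u ^ 2 ∨ p = X * u ^ 2 ∨ p = (X + 1) * u ^ 2 ∨ p = X * (X + 1) * u ^ 2 := by
  induction n using Nat.strong_induction_on with
  | _ n ih =>
  intro p w z hn hp hpw hroot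
  by_cases hd : p.natDegree = 0
  · obtain ⟨c, hc⟩ := natDegree_eq_zero.1 hd
    obtain ⟨e, he⟩ := exists_sqrt c
    exact ⟨C e, Or.inl (by rw [← hc, ← he, C_pow])⟩
  · have hdeg : p.degree ≠ 0 := fun h => hd (natDegree_eq_of_degree_eq_some h)
    obtain ⟨a, ha⟩ := IsAlgClosed.exists_root p hdeg
    obtain ⟨p', hp'⟩ := dvd_iff_isRoot.2 ha
    have hp'0 : p' ≠ 0 := by rintro rfl; apply hp; rw [hp']; simp
    have hdp : p.natDegree = p'.natDegree + 1 := by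
      rw [hp', natDegree_mul (X_sub_C_ne_zero a) hp'0, natDegree_X_sub_C]; ring
    by_cases ha01 : a = 0 ∨ a = 1
    · obtain ⟨u, hu⟩ := ih (n - 1) (by omega) p' ((X - C a) * w) z (by omega) hp'0
        (by rw [← hpw, hp']; ring) (by
          intro c hc hc'
          rw [IsRoot, eval_mul, mul_eq_zero] at hc'
          rcases hc' with hc' | hc'
          · simp [sub_eq_zero] at hc'
            rw [hc']; exact ha01
          · exact hroot c (by rw [hp']; simp [IsRoot, hc.eq_zero]) hc')
      have hX : (X - C a : κ[X]) = X ∨ (X - C a : κ[X]) = X + 1 := by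
        rcases ha01 with rfl | rfl
        · left; simp
        · right; rw [C_1]; exact CharTwo.sub_eq_add _ _
      rw [hp']
      rcases hX with hX | hX <;> rw [hX]
      · rcases hu with hu | hu | hu | hu
        · exact ⟨u, by rw [hu]; simp⟩
        · exact ⟨X * u, Or.inl (by rw [hu]; ring)⟩
        · exact ⟨u, by right; right; right; rw [hu]; ring⟩
        · exact ⟨X * u, by right; right; left; rw [hu]; ring⟩
      · rcases hu with hu | hu | hu | hu
        · exact ⟨u, by rw [hu]; simp⟩
        · exact ⟨u, by right; right; right; rw [hu]; ring⟩
        · exact ⟨(X + 1) * u, Or.inl (by rw [hu]; ring)⟩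
        · exact ⟨(X + 1) * u, by right; left; rw [hu]; ring⟩
    · have hw : ¬ (X - C a) ∣ w := fun h => ha01 (hroot a ha (dvd_iff_isRoot.1 h))
      have hpr : Prime (X - C a : κ[X]) := prime_X_sub_C a
      have hz : (X - C a) ∣ z := hpr.dvd_of_dvd_pow (n := 2) (by rw [← hpw, hp']; exact ⟨p' * w, by ring⟩)
      obtain ⟨z', hz'⟩ := hz
      have h1 : p' * w = (X - C a) * z' ^ 2 := by
        apply mul_left_cancel₀ (X_sub_C_ne_zero a)
        rw [← mul_assoc, ← hp', hpw, hz']; ring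
      obtain ⟨p'', hp''⟩ := (hpr.dvd_or_dvd ⟨_, h1⟩).resolve_right hw
      have hp''0 : p'' ≠ 0 := by rintro rfl; apply hp'0; rw [hp'']; simp
      have hdp' : p'.natDegree = p''.natDegree + 1 := by
        rw [hp'', natDegree_mul (X_sub_C_ne_zero a) hp''0, natDegree_X_sub_C]; ring
      obtain ⟨u, hu⟩ := ih (n - 2) (by omega) p'' w z' (by omega) hp''0
        (by
          apply mul_left_cancel₀ (X_sub_C_ne_zero a)
          rw [← mul_assoc, ← hp'', h1]) (by
          intro c hc hc'
          exact hroot c (by rw [hp', hp'']; simp [IsRoot, hc.eq_zero]) hc')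
      refine ⟨(X - C a) * u, ?_⟩
      rw [hp', hp'']
      rcases hu with hu | hu | hu | hu
      · left; rw [hu]; ring
      · right; left; rw [hu]; ring
      · right; right; left; rw [hu]; ring
      · right; right; right; rw [hu]; ring

instance : CharP (RatFunc κ) 2 :=
  charP_of_injective_algebraMap (RatFunc.algebraMap_injective κ) 2

lemma frac_rep (B : κ[X]) (x y : RatFunc κ)
    (h : y ^ 2 + x * y = x ^ 3 + algebraMap κ[X] (RatFunc κ) B) :
    ∃ a d Y : κ[X], d ≠ 0 ∧ IsCoprime a d ∧
      x = algebraMap κ[X] (RatFunc κ) a / algebraMap κ[X] (RatFunc κ) d ∧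
      y = algebraMap κ[X] (RatFunc κ) Y / algebraMap κ[X] (RatFunc κ) d ^ 2 ∧
      Y ^ 2 + a * d * Y = d * (a ^ 3 + B * d ^ 3) := by
  set φ := algebraMap κ[X] (RatFunc κ) with hφ
  have hinj : Function.Injective φ := RatFunc.algebraMap_injective κ
  have hd : φ x.denom ≠ 0 := fun h0 => x.denom_ne_zero (hinj (by rw [h0, _root_.map_zero]))
  have hx : x = φ x.num / φ x.denom := (RatFunc.num_div_denom x).symm
  have hxd : x * φ x.denom = φ x.num := by rw [eq_div_iff hd] at hx; exact hx
  have key : (y * φ x.denom ^ 2) ^ 2 + φ (x.num * x.denom) * (y * φ x.denom ^ 2)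
      = φ (x.denom * (x.num ^ 3 + B * x.denom ^ 3)) := by
    simp only [map_mul, map_add, map_pow, ← hxd]
    linear_combination (φ x.denom) ^ 4 * h
  have hintg : _root_.IsIntegral κ[X] (y * φ x.denom ^ 2) := by
    refine ⟨X ^ 2 + C (x.num * x.denom) * X - C (x.denom * (x.num ^ 3 + B * x.denom ^ 3)), ?_, ?_⟩
    · monicity!
    · simp only [eval₂_sub, eval₂_add, eval₂_mul, eval₂_pow, eval₂_X, eval₂_C]
      rw [← hφ]
      exact sub_eq_zero.2 key
  obtain ⟨Y, hY⟩ := IsIntegrallyClosed.isIntegral_iff.1 hintg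
  refine ⟨x.num, x.denom, Y, x.denom_ne_zero, x.isCoprime_num_denom, hx, ?_, ?_⟩
  · rw [eq_div_iff (pow_ne_zero 2 hd)]; exact hY.symm
  · apply hinj
    rw [← hY] at key
    simpa only [map_mul, map_add, map_pow] using key

/-- The square class of `x`. -/
lemma x_class (b : κ[X]) (hb : ∀ a, b.IsRoot a → a = 0 ∨ a = 1) (x y : RatFunc κ) (hx : x ≠ 0)
    (h : y ^ 2 + x * y = x ^ 3 + algebraMap κ[X] (RatFunc κ) b ^ 2) :
    ∃ u : RatFunc κ, u ≠ 0 ∧ (x = u ^ 2 ∨ x = RatFunc.X * u ^ 2 ∨ x = (RatFunc.X + 1) * u ^ 2 ∨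
      x = RatFunc.X * (RatFunc.X + 1) * u ^ 2) := by
  rw [← map_pow] at h
  obtain ⟨a, d, Y, hd, hco, hxa, -, hY⟩ := frac_rep (b ^ 2) x y h
  have ha : a ≠ 0 := by rintro rfl; apply hx; rw [hxa]; simp
  have h2 := two_poly (κ := κ)
  obtain ⟨u, hu⟩ := sqclass _ (a * d) (a ^ 2 + Y) (Y + b * d ^ 2) le_rfl (mul_ne_zero ha hd)
    (by linear_combination (-1) * hY + (a*d*Y - Y * b * d ^ 2 - b ^ 2 * d ^ 4) * h2) (by
      intro c hc hc'
      have e1 := congrArg (eval c) hY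
      obtain ⟨m, n, hmn⟩ := hco
      have e2 := congrArg (eval c) hmn
      simp only [IsRoot, eval_add, eval_mul, eval_pow, eval_one] at hc hc' e1 e2
      apply hb
      rw [IsRoot]
      by_contra hbc
      rcases mul_eq_zero.1 hc with h0 | h0
      · rw [h0] at hc' e1 e2
        have : eval c d ≠ 0 := by rintro h1; rw [h1] at e2; simp at e2
        have hY0 : eval c Y = 0 := by simpa using hc'
        rw [hY0] at e1
        have : eval c d * ((eval c b) ^ 2 * (eval c d) ^ 3) = 0 := by
          linear_combination -e1
        simp_all
      · rw [h0] at e1 e2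
        have hY0 : eval c Y = 0 := by simpa using e1
        rw [hY0] at hc'
        have : eval c a = 0 := by simpa using hc'
        rw [this] at e2; simp at e2)
  set φ := algebraMap κ[X] (RatFunc κ) with hφ
  have hinj : Function.Injective φ := RatFunc.algebraMap_injective κ
  have hd' : φ d ≠ 0 := fun h0 => hd (hinj (by rw [h0, _root_.map_zero]))
  have hxu : x = φ (a * d) / φ d ^ 2 := by rw [hxa, map_mul]; field_simp
  have hXX : φ X = RatFunc.X := RatFunc.algebraMap_X
  have hu0 : u ≠ 0 := by
    rintro rfl
    apply mul_ne_zero ha hd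
    simpa using hu
  refine ⟨φ u / φ d, div_ne_zero (fun h0 => hu0 (hinj (by rw [h0, _root_.map_zero]))) hd', ?_⟩
  rcases hu with hu | hu | hu | hu <;> rw [hu] at hxu <;>
    simp only [map_mul, map_add, map_pow, map_one, hXX] at hxu
  · left; rw [hxu]; ring
  · right; left; rw [hxu]; ring
  · right; right; left; rw [hxu]; ring
  · right; right; right; rw [hxu]; ring

end poly

section descent

variable {κ : Type*} [Field κ] [IsAlgClosed κ] [CharP κ 2]

lemma even_deg (b a d Y : κ[X]) (hb0 : b ≠ 0) (hb : 4 ∣ b.natDegree) (ha : a ≠ 0) (hd : d ≠ 0)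
    (h : Y ^ 2 + a * d * Y = d * (a ^ 3 + b ^ 2 * d ^ 3)) : Even (a * d).natDegree := by
  by_contra hodd
  rw [Nat.not_even_iff_odd] at hodd
  have h2 := two_poly (κ := κ)
  obtain ⟨m, hm⟩ := hb
  set Z := Y + b * d ^ 2 with hZ
  have e : Z ^ 2 + a * d * Z = (a * d) * (a ^ 2 + b * d ^ 2) := by
    rw [hZ]
    linear_combination h + (Y * b * d ^ 2 + b ^ 2 * d ^ 4) * h2
  have hp : a * d ≠ 0 := mul_ne_zero ha hd
  have hdp : (a * d).natDegree = a.natDegree + d.natDegree := natDegree_mul ha hd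
  have hd1 : (a ^ 2).natDegree = 2 * a.natDegree := natDegree_pow _ _
  have hd2 : (b * d ^ 2).natDegree = 4 * m + 2 * d.natDegree := by
    rw [natDegree_mul hb0 (pow_ne_zero 2 hd), natDegree_pow, hm]
  have hne : (a ^ 2).natDegree ≠ (b * d ^ 2).natDegree := by
    rw [hd1, hd2]; rcases hodd with ⟨r, hr⟩; omega
  have hq : (a ^ 2 + b * d ^ 2).natDegree = max (2 * a.natDegree) (4 * m + 2 * d.natDegree) := by
    rcases lt_or_gt_of_ne hne with hlt | hlt
    · rw [natDegree_add_eq_right_of_natDegree_lt hlt, hd2]; omega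
    · rw [natDegree_add_eq_left_of_natDegree_lt hlt, hd1]; omega
  have hq0 : a ^ 2 + b * d ^ 2 ≠ 0 := by
    intro h0
    apply hne
    have : a ^ 2 = - (b * d ^ 2) := eq_neg_of_add_eq_zero_left h0
    rw [this, natDegree_neg]
  have hr := congrArg natDegree e
  rw [natDegree_mul hp hq0, hq] at hr
  obtain ⟨r, hr'⟩ := hodd
  rcases le_or_gt Z.natDegree (a * d).natDegree with hle | hgt
  · have l1 : (Z ^ 2 + a * d * Z).natDegree ≤ 2 * (a * d).natDegree := by
      refine (natDegree_add_le _ _).trans (max_le ?_ ?_)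
      · rw [natDegree_pow]; omega
      · refine natDegree_mul_le.trans ?_; omega
    omega
  · have l1 : (a * d * Z).natDegree < (Z ^ 2).natDegree := by
      rw [natDegree_pow]
      refine natDegree_mul_le.trans_lt ?_; omega
    rw [natDegree_add_eq_left_of_natDegree_lt l1, natDegree_pow] at hr
    omega

lemma intDegree_even (b : κ[X]) (hb0 : b ≠ 0) (hb : 4 ∣ b.natDegree) (x y : RatFunc κ) (hx : x ≠ 0)
    (h : y ^ 2 + x * y = x ^ 3 + algebraMap κ[X] (RatFunc κ) b ^ 2) : Even x.intDegree := by
  rw [← map_pow] at h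
  obtain ⟨a, d, Y, hd, hco, hxa, -, hY⟩ := frac_rep (b ^ 2) x y h
  have ha : a ≠ 0 := by rintro rfl; apply hx; rw [hxa]; simp
  have := even_deg b a d Y hb0 hb ha hd hY
  have hinj : Function.Injective (algebraMap κ[X] (RatFunc κ)) := RatFunc.algebraMap_injective κ
  have hd' : algebraMap κ[X] (RatFunc κ) d ≠ 0 := fun h0 => hd (hinj (by rw [h0, _root_.map_zero]))
  have e : x * algebraMap κ[X] (RatFunc κ) d = algebraMap κ[X] (RatFunc κ) a := by
    rw [hxa]; field_simp
  have e2 := congrArg RatFunc.intDegree e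
  rw [RatFunc.intDegree_mul hx hd', RatFunc.intDegree_polynomial, RatFunc.intDegree_polynomial] at e2
  rw [natDegree_mul ha hd] at this
  obtain ⟨r, hr⟩ := this
  exact ⟨r - d.natDegree, by omega⟩

lemma x_class4 (b : κ[X]) (hb : ∀ a, b.IsRoot a → a = 0 ∨ a = 1) (hb0 : b ≠ 0)
    (hb4 : 4 ∣ b.natDegree) (x y : RatFunc κ) (hx : x ≠ 0)
    (h : y ^ 2 + x * y = x ^ 3 + algebraMap κ[X] (RatFunc κ) b ^ 2) :
    ∃ u : RatFunc κ, u ≠ 0 ∧ (x = u ^ 2 ∨ x = RatFunc.X * (RatFunc.X + 1) * u ^ 2) := by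
  obtain ⟨u, hu, hc⟩ := x_class b hb x y hx h
  obtain ⟨r, hr⟩ := intDegree_even b hb0 hb4 x y hx h
  refine ⟨u, hu, ?_⟩
  have hu2 : (u ^ 2).intDegree = 2 * u.intDegree := by
    rw [pow_two, RatFunc.intDegree_mul hu hu]; ring
  rcases hc with hc | hc | hc | hc
  · exact Or.inl hc
  · exfalso
    rw [hc, RatFunc.intDegree_mul RatFunc.X_ne_zero (pow_ne_zero 2 hu), RatFunc.intDegree_X, hu2] at hr
    omega
  · exfalso
    have e : (RatFunc.X + 1 : RatFunc κ) = algebraMap κ[X] (RatFunc κ) (X + C 1) := by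
      simp
    have e0 : (RatFunc.X + 1 : RatFunc κ) ≠ 0 := by
      intro h0; apply hx; rw [hc, h0, zero_mul]
    rw [hc, RatFunc.intDegree_mul e0 (pow_ne_zero 2 hu), hu2, e, RatFunc.intDegree_polynomial,
      natDegree_X_add_C] at hr
    push_cast at hr
    omega
  · exact Or.inr hc

variable [DecidableEq (RatFunc κ)]

lemma descent_step {c : RatFunc κ} (hc : c ≠ 0) (B : κ[X]) (hB : algebraMap κ[X] (RatFunc κ) B = c ^ 2)
    (hB1 : ∀ a, B.IsRoot a → a = 0 ∨ a = 1) (hB4 : 4 ∣ B.natDegree)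
    {x' y' : RatFunc κ} (h' : y' ^ 2 + x' * y' = x' ^ 3 + (c ^ 2) ^ 2) (v : RatFunc κ) (hv : v ≠ 0)
    (hx' : x' = RatFunc.X * (RatFunc.X + 1) * v ^ 2) (hx0 : x' ≠ 0)
    (P : (E ((c ^ 2) ^ 2)).Point) :
    ∃ Q : (E (c ^ 2)).Point, ∃ j : ℤ,
      P = Fr (c ^ 2) Q + j • pt (pow_ne_zero 2 (pow_ne_zero 2 hc)) x' y' h' := by
  have hc2 : c ^ 2 ≠ 0 := pow_ne_zero 2 hc
  have hB0 : B ≠ 0 := by rintro rfl; apply hc2; rw [← hB]; simp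
  have hT : pt (pow_ne_zero 2 hc2) 0 (c ^ 2) (by ring) = Fr (c ^ 2) (pt hc2 0 c (by ring)) := by
    rw [Fr_pt]; exact pt_congr (by ring) rfl
  rcases pt_cases (pow_ne_zero 2 hc2) P with rfl | ⟨x, y, h, rfl⟩
  · exact ⟨0, 0, by simp⟩
  by_cases hx : x = 0
  · subst hx
    refine ⟨pt hc2 0 c (by ring), 0, ?_⟩
    rw [← hT, zero_smul, add_zero]
    exact pt_congr rfl (by clear hT; grind)
  obtain ⟨u, hu, hcl⟩ := x_class4 B hB1 hB0 hB4 x y hx (by rw [hB]; exact h)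
  rcases hcl with hcl | hcl
  · obtain ⟨Q, hQ⟩ := mem_Fr hc2 h u hu hcl
    exact ⟨Q, 0, by rw [hQ]; simp⟩
  · have : x = x' * (u / v) ^ 2 := by rw [hx', hcl]; field_simp
    rcases mem_Fr_add hc2 (h := h) (h' := h') hx0 (u / v) (div_ne_zero hu hv) this with
      ⟨Q, hQ⟩ | hQ | hQ
    · exact ⟨Q, -1, by rw [← hQ]; simp⟩
    · exact ⟨0, 1, by rw [hQ]; simp⟩
    · exact ⟨pt hc2 0 c (by ring), -1, by rw [← hT, ← hQ]; simp⟩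

end descent

section artin

variable {κ : Type*} [Field κ] [IsAlgClosed κ] [CharP κ 2]

lemma isCoprime_of_irr {a b : κ[X]} (ha : a ≠ 0)
    (h : ∀ p : κ[X], Prime p → p ∣ a → p ∣ b → False) : IsCoprime a b := by
  apply isCoprime_of_prime_dvd (fun h0 => ha h0.1)
  intro z hz h1 h2
  exact h z hz h1 h2

lemma frac_rep2 (B : κ[X]) (x y : RatFunc κ)
    (h : y ^ 2 + x * y = x ^ 3 + algebraMap κ[X] (RatFunc κ) B) :
    ∃ a q r : κ[X], q ≠ 0 ∧ IsCoprime a q ∧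
      x = algebraMap κ[X] (RatFunc κ) a / algebraMap κ[X] (RatFunc κ) q ^ 2 ∧
      y = algebraMap κ[X] (RatFunc κ) r / algebraMap κ[X] (RatFunc κ) q ^ 3 ∧
      r ^ 2 + a * q * r = a ^ 3 + B * q ^ 6 := by
  obtain ⟨a, d, Y, hd, hco, hx, hy, hY⟩ := frac_rep B x y h
  have h2 := two_poly (κ := κ)
  have h1 : d * (a ^ 3 + B * d ^ 3 + a * Y) = Y ^ 2 := by
    linear_combination (-1) * hY + a * d * Y * h2
  have hcop : IsCoprime d (a ^ 3 + B * d ^ 3 + a * Y) := by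
    apply isCoprime_of_irr hd
    intro p hp hpd hpM
    have hpY : p ∣ Y := hp.dvd_of_dvd_pow (n := 2) (by rw [← h1]; exact hpd.mul_right _)
    have hpa : p ∣ a ^ 3 := by
      have : a ^ 3 = (a ^ 3 + B * d ^ 3 + a * Y) - d * (B * d ^ 2) - Y * a := by ring
      rw [this]
      exact dvd_sub (dvd_sub hpM (hpd.mul_right _)) (hpY.mul_right _)
    exact hp.not_isUnit (hco.isUnit_of_dvd' (hp.dvd_of_dvd_pow hpa) hpd)
  obtain ⟨q0, ⟨v, hv⟩⟩ := exists_associated_pow_of_mul_eq_pow' hcop h1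
  obtain ⟨c, hc, hcv⟩ := Polynomial.isUnit_iff.1 v.isUnit
  obtain ⟨e, he⟩ := exists_sqrt c
  have hq : d = (q0 * C e) ^ 2 := by
    rw [← hv, ← hcv, ← he, C_pow]; ring
  set q := q0 * C e with hqdef
  subst hq
  have hq0 : q ≠ 0 := by rintro h0; apply hd; rw [h0]; simp
  have hqY : q ∣ Y := by
    rw [← IsIntegrallyClosed.pow_dvd_pow_iff (n := 2) (by norm_num), ← h1]
    exact dvd_mul_right _ _
  obtain ⟨r, rfl⟩ := hqY
  have hinj : Function.Injective (algebraMap κ[X] (RatFunc κ)) := RatFunc.algebraMap_injective κ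
  have hq' : algebraMap κ[X] (RatFunc κ) q ≠ 0 := fun h0 => hq0 (hinj (by rw [h0, _root_.map_zero]))
  refine ⟨a, q, r, hq0, (IsCoprime.pow_right_iff (by norm_num)).1 hco, by rw [hx, map_pow], ?_, ?_⟩
  · rw [hy, map_mul, map_pow]; field_simp
  · apply mul_left_cancel₀ (pow_ne_zero 2 hq0)
    linear_combination hY

lemma as_reduce (n : ℕ) : ∀ g : κ[X], g.natDegree ≤ n →
    ∃ h g' : κ[X], g = h ^ 2 + h + g' ∧ (g'.natDegree = 0 ∨ Odd g'.natDegree) := by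
  induction n using Nat.strong_induction_on with
  | _ n ih =>
  intro g hg
  by_cases h0 : g.natDegree = 0
  · exact ⟨0, g, by simp, Or.inl h0⟩
  rcases Nat.even_or_odd g.natDegree with hev | hodd
  swap
  · exact ⟨0, g, by simp, Or.inr hodd⟩
  obtain ⟨m, hm⟩ := hev
  obtain ⟨e, he⟩ := exists_sqrt g.leadingCoeff
  have h2 := two_poly (κ := κ)
  have hgl : g = g.eraseLead + C g.leadingCoeff * X ^ g.natDegree := g.eraseLead_add_C_mul_X_pow.symm
  have hsq : C g.leadingCoeff * X ^ g.natDegree = (C e * X ^ m) ^ 2 := by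
    rw [← he, hm, C_pow]; ring
  have hdeg : (g.eraseLead + C e * X ^ m).natDegree ≤ g.natDegree - 1 := by
    refine (natDegree_add_le _ _).trans (max_le g.eraseLead_natDegree_le ?_)
    refine (natDegree_C_mul_X_pow_le _ _).trans ?_
    omega
  obtain ⟨h, g', e1, e2⟩ := ih (n - 1) (by omega) _ (hdeg.trans (by omega))
  refine ⟨h + C e * X ^ m, g', ?_, e2⟩
  rw [hsq] at hgl
  rw [hgl]
  linear_combination e1 - (h * (C e * X ^ m) + C e * X ^ m) * h2

lemma deg_as (U D g : κ[X]) (hD : D ≠ 0) (hg : Odd g.natDegree) :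
    g.natDegree + 2 * D.natDegree ≤ (U ^ 2 + U * D + g * D ^ 2).natDegree := by
  have hg0 : g ≠ 0 := by rintro rfl; simp at hg
  obtain ⟨m, hm⟩ := hg
  have e1 : (g * D ^ 2).natDegree = g.natDegree + 2 * D.natDegree := by
    rw [natDegree_mul hg0 (pow_ne_zero 2 hD), natDegree_pow]
  have e2 : (U ^ 2).natDegree = 2 * U.natDegree := natDegree_pow _ _
  have e3 : (U * D).natDegree ≤ U.natDegree + D.natDegree := natDegree_mul_le
  rcases lt_or_gt_of_ne (show 2 * U.natDegree ≠ g.natDegree + 2 * D.natDegree by omega) with hl | hl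
  · have : (U ^ 2 + U * D).natDegree < (g * D ^ 2).natDegree := by
      refine (natDegree_add_le _ _).trans_lt (max_lt ?_ ?_) <;> omega
    rw [natDegree_add_eq_right_of_natDegree_lt this]; omega
  · have : (U * D + g * D ^ 2).natDegree < (U ^ 2).natDegree := by
      refine (natDegree_add_le _ _).trans_lt (max_lt ?_ ?_) <;> omega
    rw [add_assoc, natDegree_add_eq_left_of_natDegree_lt this]; omega

lemma S_natDegree : (X ^ 2 + X : κ[X]).natDegree = 2 := by compute_degree!

lemma exists_w (x y : RatFunc κ)
    (h : y ^ 2 + x * y = x ^ 3 + algebraMap κ[X] (RatFunc κ) (X ^ 2 + X)) :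
    ∃ w : RatFunc κ, w ^ 2 + w = x := by
  obtain ⟨a, q, r, hq, hco, hx, -, hr⟩ := frac_rep2 _ x y h
  set S : κ[X] := X ^ 2 + X with hS
  have h2 := two_poly (κ := κ)
  obtain ⟨m', c', hmc⟩ := hco.symm
  set m := r * m' with hm
  set c := r * c' with hc
  have hrmc : r = m * q + c * a := by rw [hm, hc]; linear_combination (-r) * hmc
  have h3 : a ^ 2 * (c ^ 2 + c * q + a) = q ^ 2 * (m ^ 2 + a * m + S * q ^ 4) := by
    have hr' := hr
    rw [hrmc] at hr'
    linear_combination hr' + (a ^ 3 - m * q * c * a - m ^ 2 * q ^ 2 - a * m * q ^ 2) * h2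
  have h4 : q ^ 2 ∣ c ^ 2 + c * q + a :=
    (IsCoprime.pow (m := 2) (n := 2) hco.symm).dvd_of_dvd_mul_left ⟨_, h3⟩
  obtain ⟨g, hg⟩ := h4
  obtain ⟨hh, g', hg', hdeg⟩ := as_reduce _ g le_rfl
  set U := c + hh * q with hU
  have ha : a = U ^ 2 + U * q + g' * q ^ 2 := by
    rw [hU]
    rw [hg'] at hg
    linear_combination hg - (c ^ 2 + c * q + c * hh * q) * h2
  have hinj : Function.Injective (algebraMap κ[X] (RatFunc κ)) := RatFunc.algebraMap_injective κ
  have hq' : algebraMap κ[X] (RatFunc κ) q ≠ 0 := fun h0 => hq (hinj (by rw [h0, _root_.map_zero]))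
  rcases hdeg with hdeg | hdeg
  · obtain ⟨k0, hk⟩ := natDegree_eq_zero.1 hdeg
    obtain ⟨e, he⟩ := exists_as k0
    refine ⟨algebraMap κ[X] (RatFunc κ) U / algebraMap κ[X] (RatFunc κ) q +
      algebraMap κ[X] (RatFunc κ) (C e), ?_⟩
    have hC : g' = C e ^ 2 + C e := by rw [← hk, ← he]; simp
    have h2' : (2 : RatFunc κ) = 0 := CharTwo.two_eq_zero
    rw [hx, ha, hC]
    simp only [map_add, map_mul, map_pow]
    field_simp
    linear_combination algebraMap κ[X] (RatFunc κ) U * algebraMap κ[X] (RatFunc κ) q *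
      algebraMap κ[X] (RatFunc κ) (C e) * h2'
  · exfalso
    have l1 := deg_as U q g' hq hdeg
    rw [← ha] at l1
    have hg0 : 0 < g'.natDegree := hdeg.pos
    have ha0 : a ≠ 0 := by rintro rfl; simp at l1; omega
    have l2 := deg_as (r + U * a) (q * a) g' (mul_ne_zero hq ha0) hdeg
    have e : (r + U * a) ^ 2 + (r + U * a) * (q * a) + g' * (q * a) ^ 2 = S * q ^ 6 := by
      linear_combination hr - a ^ 2 * ha + (r * U * a + a ^ 3) * h2
    have hS0 : S ≠ 0 := by
      intro h0
      have := S_natDegree (κ := κ)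
      rw [← hS, h0] at this; simp at this
    rw [e, natDegree_mul hq ha0, natDegree_mul hS0 (pow_ne_zero 6 hq), natDegree_pow, hS,
      S_natDegree] at l2
    omega

end artin

section low

variable (κ : Type*) [Field κ] [IsAlgClosed κ] [CharP κ 2]

/-- `s = t² + t`. -/
noncomputable def s : RatFunc κ := RatFunc.X ^ 2 + RatFunc.X

lemma s_eq : algebraMap κ[X] (RatFunc κ) (X ^ 2 + X) = s κ := by
  simp [s]

lemma S_ne : (X ^ 2 + X : κ[X]) ≠ 0 := by
  intro h0
  have := S_natDegree (κ := κ)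
  rw [h0] at this; simp at this

lemma hs : s κ ≠ 0 := by
  rw [← s_eq]
  intro h
  exact S_ne κ (RatFunc.algebraMap_injective κ (by rw [h, _root_.map_zero]))

lemma X1_ne : (RatFunc.X + 1 : RatFunc κ) ≠ 0 := by
  intro h
  apply hs κ
  rw [s]
  linear_combination RatFunc.X * h

lemma derivS : derivative (X ^ 2 + X : κ[X]) = 1 := by
  have h2 := two_poly (κ := κ)
  simp only [derivative_add, derivative_X, derivative_X_pow]
  rw [show ((2 : ℕ) : κ) = 0 from CharP.cast_eq_zero κ 2]
  simp

lemma s_not_sq (y : RatFunc κ) : y ^ 2 ≠ s κ := by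
  intro h
  obtain ⟨a, d, Y, hd, -, hx, -, hY⟩ := frac_rep (X ^ 2 + X : κ[X]) 0 y (by
    rw [s_eq, ← h]; ring)
  have hinj : Function.Injective (algebraMap κ[X] (RatFunc κ)) := RatFunc.algebraMap_injective κ
  have hd' : algebraMap κ[X] (RatFunc κ) d ≠ 0 := fun h0 => hd (hinj (by rw [h0, _root_.map_zero]))
  have ha : a = 0 := by
    apply hinj
    rw [_root_.map_zero]
    rcases div_eq_zero_iff.1 hx.symm with h | h
    · exact h
    · exact absurd h hd'
  subst ha
  have h2 := two_poly (κ := κ)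
  have e : Y ^ 2 = (X ^ 2 + X) * (d ^ 2) ^ 2 := by linear_combination hY
  have e2 := congrArg derivative e
  rw [derivative_mul, derivS, derivative_sq, derivative_sq] at e2
  rw [show (C 2 : κ[X]) = 0 by rw [show (2 : κ) = 0 from CharTwo.two_eq_zero]; simp] at e2
  apply hd
  have : (d ^ 2) ^ 2 = 0 := by linear_combination -e2
  simpa using this

lemma S_root (a : κ) (h : (X ^ 2 + X : κ[X]).IsRoot a) : a = 0 ∨ a = 1 := by
  simp only [IsRoot, eval_add, eval_pow, eval_X] at h
  have : a * (a + 1) = 0 := by linear_combination h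
  rcases mul_eq_zero.1 this with h | h
  · exact Or.inl h
  · right; rw [← sub_eq_zero, CharTwo.sub_eq_add]; exact h

lemma x_ne_zero0 {x y : RatFunc κ} (h : y ^ 2 + x * y = x ^ 3 + s κ) : x ≠ 0 := by
  rintro rfl
  exact s_not_sq κ y (by linear_combination h)

variable [DecidableEq (RatFunc κ)]

/-- The two-torsion point on `E (s ^ 2)`. -/
noncomputable def T1 : (E (s κ ^ 2)).Point := pt (pow_ne_zero 2 (hs κ)) 0 (s κ) (by ring)

lemma eq1 {θ : RatFunc κ} (hθ : θ ^ 2 + θ = 1) :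
    (RatFunc.X ^ 2 + θ * RatFunc.X) ^ 2 + RatFunc.X * (RatFunc.X ^ 2 + θ * RatFunc.X) =
      RatFunc.X ^ 3 + s κ ^ 2 := by
  rw [s]
  have h2' : (2 : RatFunc κ) = 0 := CharTwo.two_eq_zero
  linear_combination RatFunc.X ^ 2 * hθ + (θ - 1) * RatFunc.X ^ 3 * h2'

noncomputable def P1 {θ : RatFunc κ} (hθ : θ ^ 2 + θ = 1) : (E (s κ ^ 2)).Point :=
  pt (pow_ne_zero 2 (hs κ)) RatFunc.X (RatFunc.X ^ 2 + θ * RatFunc.X) (eq1 κ hθ)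

lemma eq0 {θ : RatFunc κ} (hθ : θ ^ 2 + θ = 1) :
    (RatFunc.X + θ) ^ 2 + 1 * (RatFunc.X + θ) = 1 ^ 3 + s κ := by
  rw [s]
  have h2' : (2 : RatFunc κ) = 0 := CharTwo.two_eq_zero
  linear_combination hθ + θ * RatFunc.X * h2'

noncomputable def P0 {θ : RatFunc κ} (hθ : θ ^ 2 + θ = 1) : (E (s κ)).Point :=
  pt (hs κ) 1 (RatFunc.X + θ) (eq0 κ hθ)

lemma two_T1 : T1 κ + T1 κ = 0 := dbl_pt_zero

lemma two_P1 {θ : RatFunc κ} (hθ : θ ^ 2 + θ = 1) : P1 κ hθ + P1 κ hθ = Fr (s κ) (P0 κ hθ) := by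
  have hX : (RatFunc.X : RatFunc κ) ≠ 0 := RatFunc.X_ne_zero
  obtain ⟨x3, y3, h3, e, ex, ey⟩ := dbl_pt (hb := pow_ne_zero 2 (hs κ)) (h := eq1 κ hθ) hX
  unfold P1 P0
  rw [e, Fr_pt]
  have h2' : (2 : RatFunc κ) = 0 := CharTwo.two_eq_zero
  have hx : x3 = 1 := by
    rw [ex, s]; field_simp
    linear_combination (RatFunc.X ^ 2 + RatFunc.X) * h2'
  apply pt_congr
  · rw [hx]; ring
  · rw [ey, hx]; field_simp
    linear_combination hθ + (1 + RatFunc.X - θ ^ 2 - θ * RatFunc.X) * h2'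

lemma E1_classX {θ : RatFunc κ} (hθ : θ ^ 2 + θ = 1) {x y : RatFunc κ}
    (h : y ^ 2 + x * y = x ^ 3 + s κ ^ 2) (u : RatFunc κ) (hu : u ≠ 0) (hx : x = RatFunc.X * u ^ 2) :
    ∃ Q : (E (s κ)).Point, ∃ i j : ℤ,
      pt (pow_ne_zero 2 (hs κ)) x y h = Fr (s κ) Q + i • T1 κ + j • P1 κ hθ := by
  rcases mem_Fr_add (hs κ) (h := h) (h' := eq1 κ hθ) RatFunc.X_ne_zero u hu hx with ⟨Q, hQ⟩ | hQ | hQ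
  · refine ⟨Q, 0, -1, ?_⟩
    rw [← hQ, P1]; simp
  · refine ⟨0, 0, 1, ?_⟩
    rw [hQ, P1]; simp
  · refine ⟨0, 1, -1, ?_⟩
    rw [T1, ← hQ, P1]; simp

lemma E1_step {θ : RatFunc κ} (hθ : θ ^ 2 + θ = 1) (P : (E (s κ ^ 2)).Point) :
    ∃ Q : (E (s κ)).Point, ∃ i j : ℤ, P = Fr (s κ) Q + i • T1 κ + j • P1 κ hθ := by
  rcases pt_cases (pow_ne_zero 2 (hs κ)) P with rfl | ⟨x, y, h, rfl⟩
  · exact ⟨0, 0, 0, by simp⟩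
  by_cases hx : x = 0
  · subst hx
    refine ⟨0, 1, 0, ?_⟩
    rw [T1]
    simp only [_root_.map_zero, zero_add, one_smul, zero_smul, add_zero]
    exact pt_congr rfl (by grind)
  have hX : (RatFunc.X : RatFunc κ) ≠ 0 := RatFunc.X_ne_zero
  have hX1 := X1_ne κ
  obtain ⟨u, hu, hcl⟩ := x_class _ (S_root κ) x y hx (by rw [s_eq]; exact h)
  obtain ⟨y3, h3, e3⟩ := add_T (hs κ) (h := h) hx
  rcases hcl with hcl | hcl | hcl | hcl
  · obtain ⟨Q, hQ⟩ := mem_Fr (hs κ) h u hu hcl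
    exact ⟨Q, 0, 0, by rw [hQ]; simp⟩
  · exact E1_classX κ hθ h u hu hcl
  · obtain ⟨Q, i, j, hQ⟩ := E1_classX κ hθ h3 u⁻¹ (inv_ne_zero hu) (by
      rw [hcl, s]; field_simp)
    refine ⟨Q, i - 1, j, ?_⟩
    rw [← e3, ← eq_sub_iff_add_eq] at hQ
    rw [hQ, T1, sub_smul, one_smul]; abel
  · obtain ⟨Q, hQ⟩ := mem_Fr (hs κ) h3 u⁻¹ (inv_ne_zero hu) (by rw [hcl, s]; field_simp)
    refine ⟨Q, -1, 0, ?_⟩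
    rw [← e3, ← eq_sub_iff_add_eq] at hQ
    rw [hQ, T1]; simp [sub_eq_add_neg]

lemma V_surj (P : (E (s κ)).Point) : ∃ Q : (E (s κ ^ 2)).Point, Q + Q = Fr (s κ) P := by
  rcases pt_cases (hs κ) P with rfl | ⟨x, y, h, rfl⟩
  · exact ⟨0, by simp⟩
  obtain ⟨w, hw⟩ := exists_w x y (by rw [s_eq]; exact h)
  have h2' : (2 : RatFunc κ) = 0 := CharTwo.two_eq_zero
  exact halve (hs κ) h (x_ne_zero0 κ h) (x * w + y) (by
    linear_combination h + x ^ 2 * hw + (s κ + x ^ 3 - x ^ 2 * w - x * y + x * y * w) * h2')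

lemma E0_step {θ : RatFunc κ} (hθ : θ ^ 2 + θ = 1) (P : (E (s κ)).Point) :
    ∃ Q : (E (s κ)).Point, ∃ j : ℤ, P = Q + Q + j • P0 κ hθ := by
  obtain ⟨Q', hQ'⟩ := V_surj κ P
  obtain ⟨Q, i, j, rfl⟩ := E1_step κ hθ Q'
  refine ⟨Q, j, ?_⟩
  apply Fr_inj (hs κ)
  rw [← hQ', map_add, map_add, map_zsmul, ← two_P1, zsmul_add]
  have : i • T1 κ + i • T1 κ = 0 := by rw [← zsmul_add, two_T1, zsmul_zero]
  calc _ = Fr (s κ) Q + Fr (s κ) Q + (j • P1 κ hθ + j • P1 κ hθ) + (i • T1 κ + i • T1 κ) := by abel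
    _ = _ := by rw [this, add_zero]

lemma E0_cases {θ : RatFunc κ} (hθ : θ ^ 2 + θ = 1) (P : (E (s κ)).Point) :
    (∃ Q, P = Q + Q) ∨ ∃ Q Q', P + P0 κ hθ = Q + Q ∧ P - P0 κ hθ = Q' + Q' := by
  obtain ⟨Q, j, hj⟩ := E0_step κ hθ P
  rcases Int.even_or_odd' j with ⟨m, rfl | rfl⟩
  · left
    refine ⟨Q + m • P0 κ hθ, ?_⟩
    rw [hj, two_mul, add_zsmul]; abel
  · right
    refine ⟨Q + (m + 1) • P0 κ hθ, Q + m • P0 κ hθ, ?_, ?_⟩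
    · rw [hj, two_mul, add_zsmul, add_zsmul, add_zsmul, one_zsmul]; abel
    · rw [hj, two_mul, add_zsmul, add_zsmul, one_zsmul]; abel

end low

section heights

variable {κ : Type*} [Field κ] [IsAlgClosed κ] [CharP κ 2]

lemma phi_ne {d : κ[X]} (hd : d ≠ 0) : algebraMap κ[X] (RatFunc κ) d ≠ 0 := fun h0 =>
  hd (RatFunc.algebraMap_injective κ (by rw [h0, _root_.map_zero]))

/-- Naive height of a rational function. -/
noncomputable def ht (x : RatFunc κ) : ℕ := max x.num.natDegree x.denom.natDegree

lemma deg_of_frac {x : RatFunc κ} {a d : κ[X]} (ha : a ≠ 0) (hd : d ≠ 0) (hco : IsCoprime a d)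
    (hx : x = algebraMap κ[X] (RatFunc κ) a / algebraMap κ[X] (RatFunc κ) d) :
    x.num.natDegree = a.natDegree ∧ x.denom.natDegree = d.natDegree := by
  have hd' := phi_ne hd
  have hD' := phi_ne x.denom_ne_zero
  have hx0 : x ≠ 0 := by
    rw [hx]; exact div_ne_zero (phi_ne ha) hd'
  have hn0 : x.num ≠ 0 := RatFunc.num_ne_zero hx0
  have hco' := x.isCoprime_num_denom
  have e : x.num * d = a * x.denom := by
    apply RatFunc.algebraMap_injective κ
    rw [map_mul, map_mul]
    have h1 := RatFunc.num_div_denom x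
    rw [div_eq_iff hD'] at h1
    rw [h1, hx]
    field_simp
  have h1 : x.num ∣ a := hco'.dvd_of_dvd_mul_right ⟨d, e.symm⟩
  have h2 : a ∣ x.num := hco.dvd_of_dvd_mul_right ⟨x.denom, e⟩
  have h3 : d ∣ x.denom := hco.symm.dvd_of_dvd_mul_left ⟨x.num, by rw [← e]; ring⟩
  have h4 : x.denom ∣ d := hco'.symm.dvd_of_dvd_mul_left ⟨a, by rw [e]; ring⟩
  exact ⟨le_antisymm (natDegree_le_of_dvd h1 ha) (natDegree_le_of_dvd h2 hn0),
    le_antisymm (natDegree_le_of_dvd h4 hd) (natDegree_le_of_dvd h3 x.denom_ne_zero)⟩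

lemma S_sqfree (p : κ[X]) (hp : Prime p) (h : p ^ 2 ∣ (X ^ 2 + X : κ[X])) : False := by
  obtain ⟨g, hg⟩ := h
  have e := congrArg derivative hg
  rw [derivS, derivative_mul, derivative_sq] at e
  apply hp.not_isUnit
  apply isUnit_of_dvd_one
  rw [e]
  exact ⟨C 2 * derivative p * g + p * derivative g, by ring⟩

lemma ht_dbl {x y x2 : RatFunc κ} (h : y ^ 2 + x * y = x ^ 3 + s κ) (hx2 : x2 = x ^ 2 + s κ / x ^ 2) :
    4 * ht x ≤ x2.num.natDegree ∧ 2 ≤ x2.num.natDegree ∧ x2.num.natDegree ≤ ht x2 := by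
  have hx0 := x_ne_zero0 κ h
  obtain ⟨a, d, Y, hd, hco, hx, -, hY⟩ := frac_rep (X ^ 2 + X : κ[X]) x y (by rw [s_eq]; exact h)
  have hsS := s_eq κ
  have hSd := S_natDegree (κ := κ)
  have hsq := S_sqfree (κ := κ)
  have hS0 := S_ne κ
  set S : κ[X] := X ^ 2 + X
  have ha : a ≠ 0 := by rintro rfl; apply hx0; rw [hx]; simp
  have hSa : IsCoprime a S := by
    apply isCoprime_of_irr ha
    intro p hp hpa hpS
    have hpY : p ∣ Y := by
      apply hp.dvd_of_dvd_pow (n := 2)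
      have : Y ^ 2 = a * (d * a ^ 2 - d * Y) + S * d ^ 4 := by linear_combination hY
      rw [this]
      exact dvd_add (hpa.mul_right _) (hpS.mul_right _)
    obtain ⟨a', ha'⟩ := hpa
    obtain ⟨Y', hY'⟩ := hpY
    have h1 : p ^ 2 ∣ S * d ^ 4 := by
      refine ⟨Y' ^ 2 + a' * d * Y' - d * p * a' ^ 3, ?_⟩
      rw [ha', hY'] at hY
      linear_combination -hY
    have h2 : IsCoprime (p ^ 2) (d ^ 4) := by
      apply IsCoprime.pow
      exact hco.of_isCoprime_of_dvd_left ⟨a', ha'⟩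
    exact hsq p hp (h2.dvd_of_dvd_mul_right h1)
  have hc1 : IsCoprime (a ^ 4 + S * d ^ 4) d := by
    have : IsCoprime (a ^ 4 + d * (S * d ^ 3)) d :=
      IsCoprime.add_mul_left_left (IsCoprime.pow_left hco) _
    convert this using 1; ring
  have hc2 : IsCoprime (a ^ 4 + S * d ^ 4) a := by
    have h0 : IsCoprime (S * d ^ 4) a := IsCoprime.mul_left hSa.symm (IsCoprime.pow_left hco.symm)
    have : IsCoprime (S * d ^ 4 + a * a ^ 3) a := IsCoprime.add_mul_left_left h0 _
    convert this using 1; ring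
  have hc : IsCoprime (a ^ 4 + S * d ^ 4) (a ^ 2 * d ^ 2) :=
    IsCoprime.mul_right (IsCoprime.pow_right hc2) (IsCoprime.pow_right hc1)
  have hd1 : (a ^ 4).natDegree = 4 * a.natDegree := natDegree_pow _ _
  have hd2 : (S * d ^ 4).natDegree = 2 + 4 * d.natDegree := by
    rw [natDegree_mul hS0 (pow_ne_zero 4 hd), natDegree_pow, hSd]
  have hq : (a ^ 4 + S * d ^ 4).natDegree = max (4 * a.natDegree) (2 + 4 * d.natDegree) := by
    rcases lt_or_gt_of_ne (show 4 * a.natDegree ≠ 2 + 4 * d.natDegree by omega) with hlt | hlt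
    · rw [natDegree_add_eq_right_of_natDegree_lt (by omega), hd2]; omega
    · rw [natDegree_add_eq_left_of_natDegree_lt (by omega), hd1]; omega
  have hq0 : a ^ 4 + S * d ^ 4 ≠ 0 := by
    intro h0; rw [h0, natDegree_zero] at hq; omega
  have hx2' : x2 = algebraMap κ[X] (RatFunc κ) (a ^ 4 + S * d ^ 4) /
      algebraMap κ[X] (RatFunc κ) (a ^ 2 * d ^ 2) := by
    have ha' := phi_ne ha
    have hd' := phi_ne hd
    rw [hx2, hx, ← hsS]
    simp only [map_add, map_mul, map_pow]
    field_simp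
  obtain ⟨n1, n2⟩ := deg_of_frac hq0 (mul_ne_zero (pow_ne_zero 2 ha) (pow_ne_zero 2 hd)) hc hx2'
  obtain ⟨m1, m2⟩ := deg_of_frac ha hd hco hx
  rw [ht, ht, n1, hq, m1, m2]
  refine ⟨?_, ?_, ?_⟩ <;> omega

lemma primitive_dvd {a3 b3 a4 b4 z : κ[X]} (h3 : IsCoprime a3 b3) (h4 : IsCoprime a4 b4)
    (h1 : b3 * b4 ∣ (a3 * b4 + a4 * b3) * z) (h2 : b3 * b4 ∣ a3 * a4 * z) : b3 * b4 ∣ z := by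
  have key : Ideal.span {b3 * b4, a3 * b4 + a4 * b3, a3 * a4} = (⊤ : Ideal κ[X]) := by
    by_contra hne
    obtain ⟨M, hM, hle⟩ := Ideal.exists_le_maximal _ hne
    have hp := hM.isPrime
    have m1 : b3 * b4 ∈ M := hle (Ideal.subset_span (by simp))
    have m2 : a3 * b4 + a4 * b3 ∈ M := hle (Ideal.subset_span (by simp))
    have m3 : a3 * a4 ∈ M := hle (Ideal.subset_span (by simp))
    have n3 : ¬ (a3 ∈ M ∧ b3 ∈ M) := by
      rintro ⟨u, v⟩
      obtain ⟨m, n, hmn⟩ := h3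
      apply hp.ne_top
      rw [Ideal.eq_top_iff_one, ← hmn]
      exact M.add_mem (M.mul_mem_left _ u) (M.mul_mem_left _ v)
    have n4 : ¬ (a4 ∈ M ∧ b4 ∈ M) := by
      rintro ⟨u, v⟩
      obtain ⟨m, n, hmn⟩ := h4
      apply hp.ne_top
      rw [Ideal.eq_top_iff_one, ← hmn]
      exact M.add_mem (M.mul_mem_left _ u) (M.mul_mem_left _ v)
    rcases hp.mem_or_mem m1 with u | u
    · have : a3 * b4 ∈ M := (M.add_mem_iff_left (M.mul_mem_left _ u)).1 m2
      rcases hp.mem_or_mem this with v | v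
      · exact n3 ⟨v, u⟩
      · rcases hp.mem_or_mem m3 with w | w
        · exact n3 ⟨w, u⟩
        · exact n4 ⟨w, v⟩
    · have : a4 * b3 ∈ M := (M.add_mem_iff_right (M.mul_mem_left _ u)).1 m2
      rcases hp.mem_or_mem this with v | v
      · exact n4 ⟨v, u⟩
      · rcases hp.mem_or_mem m3 with w | w
        · exact n3 ⟨w, v⟩
        · exact n4 ⟨w, u⟩
  have h1m : (1 : κ[X]) ∈ Ideal.span {b3 * b4, a3 * b4 + a4 * b3, a3 * a4} := by rw [key]; trivial
  rw [Ideal.mem_span_insert] at h1m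
  obtain ⟨c1, w, hw, e1⟩ := h1m
  rw [Ideal.mem_span_pair] at hw
  obtain ⟨c2, c3, e2⟩ := hw
  have : z = b3 * b4 * (c1 * z) + (a3 * b4 + a4 * b3) * z * c2 + a3 * a4 * z * c3 := by
    rw [← e2] at e1
    linear_combination z * e1
  rw [this]
  exact dvd_add (dvd_add (dvd_mul_right _ _) (h1.mul_right _)) (h2.mul_right _)

lemma ht_add_sub {x x3 x4 : RatFunc κ} (hx1 : x ≠ 1) (h3 : x3 ≠ 0) (h4 : x4 ≠ 0)
    (e1 : (x3 + x4) * (x + 1) ^ 2 = x * 1) (e2 : x3 * x4 * (x + 1) ^ 2 = x ^ 2 * 1 ^ 2 + s κ) :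
    x3.num.natDegree + x4.num.natDegree ≤ 2 * ht x + 2 := by
  have hd := x.denom_ne_zero
  have hb3 := x3.denom_ne_zero
  have hb4 := x4.denom_ne_zero
  have ha3 := RatFunc.num_ne_zero h3
  have ha4 := RatFunc.num_ne_zero h4
  have q := RatFunc.num_div_denom x
  have q3 := RatFunc.num_div_denom x3
  have q4 := RatFunc.num_div_denom x4
  have c3 := x3.isCoprime_num_denom
  have c4 := x4.isCoprime_num_denom
  have hsS := s_eq κ
  have hSd := S_natDegree (κ := κ)
  rw [ht]
  generalize x.num = a at *
  generalize x.denom = d at *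
  generalize x3.num = a3 at *
  generalize x3.denom = b3 at *
  generalize x4.num = a4 at *
  generalize x4.denom = b4 at *
  generalize (X ^ 2 + X : κ[X]) = S at *
  have hd' := phi_ne hd
  have hb3' := phi_ne hb3
  have hb4' := phi_ne hb4
  have f1 : (a3 * b4 + a4 * b3) * (a + d) ^ 2 = b3 * b4 * (a * d) := by
    apply RatFunc.algebraMap_injective κ
    rw [← q, ← q3, ← q4] at e1
    simp only [map_mul, map_add, map_pow]
    field_simp at e1
    linear_combination e1
  have f2 : a3 * a4 * (a + d) ^ 2 = b3 * b4 * (a ^ 2 + S * d ^ 2) := by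
    apply RatFunc.algebraMap_injective κ
    rw [← q, ← q3, ← q4, ← hsS] at e2
    simp only [map_mul, map_add, map_pow]
    field_simp at e2
    linear_combination e2
  have hz : (a + d) ^ 2 ≠ 0 := by
    apply pow_ne_zero
    intro h0
    apply hx1
    rw [← q]
    have : a = d := by rwa [← sub_eq_zero, CharTwo.sub_eq_add]
    rw [this, div_self hd']
  obtain ⟨e, he⟩ := primitive_dvd c3 c4 ⟨_, f1⟩ ⟨_, f2⟩
  have he0 : e ≠ 0 := by rintro rfl; apply hz; rw [he]; simp
  have f3 : a3 * a4 * e = a ^ 2 + S * d ^ 2 := by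
    apply mul_left_cancel₀ (mul_ne_zero hb3 hb4)
    rw [← f2, he]; ring
  have g := congrArg natDegree f3
  rw [natDegree_mul (mul_ne_zero ha3 ha4) he0, natDegree_mul ha3 ha4] at g
  have l : (a ^ 2 + S * d ^ 2).natDegree ≤ max (2 * a.natDegree) (2 + 2 * d.natDegree) := by
    refine (natDegree_add_le _ _).trans (max_le_max (natDegree_pow_le) ?_)
    refine natDegree_mul_le.trans ?_
    rw [hSd]
    have := natDegree_pow_le (p := d) (n := 2)
    omega
  omega

end heights

section assembly

lemma iso_of_gen {A : Type*} [AddCommGroup A] (Z R : A) (hR : addOrderOf R = 8)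
    (hZ : ∀ n : ℤ, n • Z = 0 → n = 0) (hgen : ∀ P : A, ∃ i j : ℤ, P = i • R + j • Z) :
    Nonempty (A ≃+ (ℤ × ZMod 8)) := by
  have h8 : zmultiplesHom A R (8 : ℕ) = 0 := by
    rw [zmultiplesHom_apply, natCast_zsmul, ← hR, addOrderOf_nsmul_eq_zero]
  let g : ZMod 8 →+ A := ZMod.lift 8 ⟨zmultiplesHom A R, h8⟩
  have hg : ∀ i : ℤ, g (i : ZMod 8) = i • R := fun i => by
    simp [g, ZMod.lift_coe]
  let f : ℤ × ZMod 8 →+ A := (zmultiplesHom A Z).coprod g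
  have hf : ∀ i j : ℤ, f (j, (i : ZMod 8)) = j • Z + i • R := fun i j => by
    simp [f, hg]
  refine ⟨(AddEquiv.ofBijective f ⟨?_, ?_⟩).symm⟩
  · rw [injective_iff_map_eq_zero]
    rintro ⟨n, k⟩ h
    obtain ⟨i, rfl⟩ := ZMod.intCast_surjective k
    rw [hf] at h
    have h8' : (8 : ℤ) • R = 0 := by
      rw [zmultiplesHom_apply] at h8; exact_mod_cast h8
    have hn : n = 0 := by
      have : (8 * n) • Z = 0 := by
        have h1 : (8 : ℤ) • (n • Z + i • R) = 0 := by rw [h, zsmul_zero]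
        rw [zsmul_add, smul_comm (8 : ℤ) i R, h8', zsmul_zero, add_zero, ← mul_zsmul'] at h1
        rwa [mul_comm] at h1
      have := hZ _ this
      omega
    subst hn
    rw [zero_zsmul, zero_add] at h
    have : ((addOrderOf R : ℕ) : ℤ) ∣ i := addOrderOf_dvd_iff_zsmul_eq_zero.2 h
    rw [hR] at this
    rw [(ZMod.intCast_zmod_eq_zero_iff_dvd i 8).2 this]
    rfl
  · intro P
    obtain ⟨i, j, rfl⟩ := hgen P
    exact ⟨(j, i), by rw [hf, add_comm]⟩

variable (κ : Type*) [Field κ] [IsAlgClosed κ] [CharP κ 2] [DecidableEq (RatFunc κ)]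

lemma E0_gen {θ : RatFunc κ} (hθ : θ ^ 2 + θ = 1) (n : ℕ) : ∀ x y : RatFunc κ, ∀ h, ht x ≤ n →
    pt (hs κ) x y h ∈ AddSubgroup.zmultiples (P0 κ hθ) := by
  induction n using Nat.strong_induction_on with
  | _ n ih =>
  intro x y h hn
  have hP0 : P0 κ hθ ∈ AddSubgroup.zmultiples (P0 κ hθ) := AddSubgroup.mem_zmultiples _
  have step : ∀ (x3 y3 : RatFunc κ) (h3) (Q : (E (s κ)).Point), pt (hs κ) x3 y3 h3 = Q + Q →
      2 ≤ x3.num.natDegree ∧ x3.num.natDegree ≤ ht x3 ∧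
      (x3.num.natDegree ≤ ht x + 1 → Q ∈ AddSubgroup.zmultiples (P0 κ hθ)) := by
    intro x3 y3 h3 Q hQ
    rcases pt_cases (hs κ) Q with rfl | ⟨x', y', h', rfl⟩
    · exfalso; rw [add_zero] at hQ
      exact pt_ne_zero _ _ _ _ hQ
    · obtain ⟨x2, y2, h2, e, ex, -⟩ := dbl_pt (hb := hs κ) (h := h') (x_ne_zero0 κ h')
      rw [e] at hQ
      have := (pt_inj hQ).1
      obtain ⟨l1, l2, l3⟩ := ht_dbl h' ex
      rw [this]
      refine ⟨l2, l3, fun l => ?_⟩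
      exact ih (ht x') (by omega) x' y' h' le_rfl
  rcases E0_cases κ hθ (pt (hs κ) x y h) with ⟨Q, hQ⟩ | ⟨Q, Q', hQ, hQ'⟩
  · obtain ⟨l1, l2, l3⟩ := step x y h Q hQ
    rw [hQ]
    have := l3 ((le_max_left _ _).trans (Nat.le_succ _))
    exact add_mem this this
  · by_cases hx : x = 1
    · subst hx
      rcases pt_eq_or_neg (hb := hs κ) (h := h) (h' := eq0 κ hθ) with e | e
      · rw [e]; exact hP0
      · rw [e]; exact neg_mem hP0
    · obtain ⟨x3, y3, h3, x4, y4, h4, e3, e4, f1, f2⟩ :=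
        add_sub_pt (hb := hs κ) (h := h) (h' := eq0 κ hθ) hx
      have l := ht_add_sub hx (x_ne_zero0 κ h3) (x_ne_zero0 κ h4) f1 f2
      rw [P0, e3] at hQ
      rw [P0, e4] at hQ'
      obtain ⟨l1, l2, l3⟩ := step x3 y3 h3 Q hQ
      obtain ⟨m1, m2, m3⟩ := step x4 y4 h4 Q' hQ'
      rcases le_total x3.num.natDegree x4.num.natDegree with hle | hle
      · have hm := l3 (by omega)
        have : pt (hs κ) x y h = Q + Q - P0 κ hθ := by rw [← hQ, ← e3, P0]; simp
        rw [this]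
        exact sub_mem (add_mem hm hm) hP0
      · have hm := m3 (by omega)
        have : pt (hs κ) x y h = Q' + Q' + P0 κ hθ := by rw [← hQ', ← e4, P0]; simp
        rw [this]
        exact add_mem (add_mem hm hm) hP0

lemma E0_gen' {θ : RatFunc κ} (hθ : θ ^ 2 + θ = 1) (P : (E (s κ)).Point) :
    ∃ n : ℤ, P = n • P0 κ hθ := by
  rcases pt_cases (hs κ) P with rfl | ⟨x, y, h, rfl⟩
  · exact ⟨0, by simp⟩
  · obtain ⟨n, hn⟩ := AddSubgroup.mem_zmultiples_iff.1 (E0_gen κ hθ _ x y h le_rfl)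
    exact ⟨n, hn.symm⟩

/-- Height of a point. -/
noncomputable def htP {b : RatFunc κ} : (E b).Point → ℕ
  | 0 => 0
  | .some x _ _ => ht x

lemma htP_dbl {Q : (E (s κ)).Point} (hQ : Q ≠ 0) : Q + Q ≠ 0 ∧ htP κ Q < htP κ (Q + Q) := by
  rcases pt_cases (hs κ) Q with rfl | ⟨x', y', h', rfl⟩
  · exact absurd rfl hQ
  obtain ⟨x2, y2, h2, e, ex, -⟩ := dbl_pt (hb := hs κ) (h := h') (x_ne_zero0 κ h')
  obtain ⟨l1, l2, l3⟩ := ht_dbl h' ex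
  rw [e]
  refine ⟨pt_ne_zero _ _ _ _, ?_⟩
  change ht x' < ht x2
  omega

lemma P0_inf {θ : RatFunc κ} (hθ : θ ^ 2 + θ = 1) (n : ℤ) (hn : n • P0 κ hθ = 0) : n = 0 := by
  by_contra hn0
  let f : ℕ → (E (s κ)).Point := fun k => (2 ^ k) • P0 κ hθ
  have hf : ∀ k, f (k + 1) = f k + f k := fun k => by
    simp only [f]; rw [pow_succ, mul_two, add_nsmul]
  have hf0 : ∀ k, f k ≠ 0 := by
    intro k
    induction k with
    | zero => simp only [f, pow_zero, one_nsmul]; exact pt_ne_zero _ _ _ _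
    | succ k ih => rw [hf]; exact (htP_dbl κ ih).1
  have hmono : StrictMono (fun k => htP κ (f k)) := strictMono_nat_of_lt_succ fun k => by
    rw [hf]; exact (htP_dbl κ (hf0 k)).2
  have hinj : Function.Injective f := fun i j hij => hmono.injective (by simp only [hij])
  have hfin : IsOfFinAddOrder (P0 κ hθ) := isOfFinAddOrder_iff_zsmul_eq_zero.2 ⟨n, hn0, hn⟩
  have hfs := hfin.finite_zmultiples
  exact Set.infinite_range_of_injective hinj (hfs.subset (by
    rintro _ ⟨k, rfl⟩
    exact AddSubgroup.nsmul_mem _ (AddSubgroup.mem_zmultiples _) _))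

lemma P1_inf {θ : RatFunc κ} (hθ : θ ^ 2 + θ = 1) (n : ℤ) (hn : n • P1 κ hθ = 0) : n = 0 := by
  apply P0_inf κ hθ
  apply Fr_inj (hs κ)
  rw [map_zsmul, ← two_P1, zsmul_add, hn, _root_.map_zero, add_zero]

lemma E1_gen {θ : RatFunc κ} (hθ : θ ^ 2 + θ = 1) (P : (E (s κ ^ 2)).Point) :
    ∃ i j : ℤ, P = i • T1 κ + j • P1 κ hθ := by
  obtain ⟨Q, i, j, rfl⟩ := E1_step κ hθ P
  obtain ⟨n, rfl⟩ := E0_gen' κ hθ Q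
  refine ⟨i, n + n + j, ?_⟩
  rw [map_zsmul, ← two_P1, zsmul_add, add_zsmul, add_zsmul]
  abel

lemma eqQ : (s κ ^ 2) ^ 2 + s κ * s κ ^ 2 = s κ ^ 3 + (s κ ^ 2) ^ 2 := by ring

lemma eqR : (s κ * RatFunc.X ^ 2 * (RatFunc.X * (RatFunc.X + 1) ^ 3 + RatFunc.X)) ^ 2 +
    (s κ * RatFunc.X ^ 2) * (s κ * RatFunc.X ^ 2 * (RatFunc.X * (RatFunc.X + 1) ^ 3 + RatFunc.X)) =
    (s κ * RatFunc.X ^ 2) ^ 3 + ((s κ ^ 2) ^ 2) ^ 2 := by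
  rw [s]
  generalize (RatFunc.X : RatFunc κ) = x
  grind

lemma hs4 : (s κ ^ 2) ^ 2 ≠ 0 := pow_ne_zero 2 (pow_ne_zero 2 (hs κ))
lemma hs8 : ((s κ ^ 2) ^ 2) ^ 2 ≠ 0 := pow_ne_zero 2 (hs4 κ)

/-- The point `Q` on `E₂`. -/
noncomputable def Q2 : (E ((s κ ^ 2) ^ 2)).Point := pt (hs4 κ) (s κ) (s κ ^ 2) (eqQ κ)

/-- The point of order eight. -/
noncomputable def R3 : (E (((s κ ^ 2) ^ 2) ^ 2)).Point := pt (hs8 κ) _ _ (eqR κ)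

lemma E2_step (P : (E ((s κ ^ 2) ^ 2)).Point) :
    ∃ Q : (E (s κ ^ 2)).Point, ∃ j : ℤ, P = Fr (s κ ^ 2) Q + j • Q2 κ := by
  refine descent_step (hs κ) ((X ^ 2 + X) ^ 2) (by rw [map_pow, s_eq]) ?_ ?_ (eqQ κ) 1 one_ne_zero
    (by rw [s]; ring) (hs κ) P
  · intro a ha
    apply S_root κ
    simpa only [IsRoot, eval_pow, pow_eq_zero_iff, ne_eq, OfNat.ofNat_ne_zero, not_false_eq_true]
      using ha
  · rw [natDegree_pow, S_natDegree]

lemma E3_step (P : (E (((s κ ^ 2) ^ 2) ^ 2)).Point) :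
    ∃ Q : (E ((s κ ^ 2) ^ 2)).Point, ∃ j : ℤ, P = Fr ((s κ ^ 2) ^ 2) Q + j • R3 κ := by
  have hX : (RatFunc.X : RatFunc κ) ≠ 0 := RatFunc.X_ne_zero
  refine descent_step (pow_ne_zero 2 (hs κ)) ((X ^ 2 + X) ^ 4) (by rw [map_pow, s_eq]; ring) ?_ ?_
    (eqR κ) RatFunc.X hX (by rw [s]; ring) (mul_ne_zero (hs κ) (pow_ne_zero 2 hX)) P
  · intro a ha
    apply S_root κ
    simpa only [IsRoot, eval_pow, pow_eq_zero_iff, ne_eq, OfNat.ofNat_ne_zero, not_false_eq_true]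
      using ha
  · rw [natDegree_pow, S_natDegree]; norm_num

lemma two_R : ∃ y h, R3 κ + R3 κ = pt (hs8 κ) (s κ ^ 2) y h := by
  have hX : (RatFunc.X : RatFunc κ) ≠ 0 := RatFunc.X_ne_zero
  have hX1 := X1_ne κ
  obtain ⟨x3, y3, h3, e, ex, -⟩ := dbl_pt (hb := hs8 κ) (h := eqR κ)
    (mul_ne_zero (hs κ) (pow_ne_zero 2 hX))
  have : x3 = s κ ^ 2 := by
    have h2' : (2 : RatFunc κ) = 0 := CharTwo.two_eq_zero
    rw [ex, s]; field_simp
    grind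
  subst this
  exact ⟨y3, h3, e⟩

lemma four_R : (R3 κ + R3 κ) + (R3 κ + R3 κ) = pt (hs8 κ) 0 ((s κ ^ 2) ^ 2) (by ring) := by
  obtain ⟨y, h, e⟩ := two_R κ
  obtain ⟨x3, y3, h3, e', ex, -⟩ := dbl_pt (hb := hs8 κ) (h := h) (pow_ne_zero 2 (hs κ))
  rw [e, e']
  have hs0 := hs κ
  have hx : x3 = 0 := by
    have h2' : (2 : RatFunc κ) = 0 := CharTwo.two_eq_zero
    rw [ex]; field_simp
    linear_combination s κ ^ 4 * h2'
  subst hx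
  exact pt_congr rfl (by clear * - h3; grind)

lemma order_R : addOrderOf (R3 κ) = 8 := by
  have h4 : (2 ^ 2) • R3 κ = pt (hs8 κ) 0 ((s κ ^ 2) ^ 2) (by ring) := by
    rw [← four_R]; simp only [show (2 ^ 2 : ℕ) = 1 + 1 + (1 + 1) by norm_num, add_nsmul, one_nsmul]
  have h8 : (2 ^ (2 + 1)) • R3 κ = 0 := by
    rw [show (2 ^ (2 + 1) : ℕ) = 2 ^ 2 + 2 ^ 2 by norm_num, add_nsmul, h4]; exact dbl_pt_zero
  exact addOrderOf_eq_prime_pow (p := 2) (n := 2) (by rw [h4]; exact pt_ne_zero _ _ _ _) h8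

/-- The point of infinite order. -/
noncomputable def Z3 {θ : RatFunc κ} (hθ : θ ^ 2 + θ = 1) : (E (((s κ ^ 2) ^ 2) ^ 2)).Point :=
  Fr ((s κ ^ 2) ^ 2) (Fr (s κ ^ 2) (P1 κ hθ))

lemma Z_inf {θ : RatFunc κ} (hθ : θ ^ 2 + θ = 1) (n : ℤ) (hn : n • Z3 κ hθ = 0) : n = 0 := by
  apply P1_inf κ hθ
  apply Fr_inj (pow_ne_zero 2 (hs κ))
  apply Fr_inj (hs4 κ)
  rw [map_zsmul, map_zsmul, _root_.map_zero, _root_.map_zero]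
  exact hn

lemma E3_gen {θ : RatFunc κ} (hθ : θ ^ 2 + θ = 1) (P : (E (((s κ ^ 2) ^ 2) ^ 2)).Point) :
    ∃ i j : ℤ, P = i • R3 κ + j • Z3 κ hθ := by
  obtain ⟨A, j3, rfl⟩ := E3_step κ P
  obtain ⟨B, j2, rfl⟩ := E2_step κ A
  obtain ⟨i, j, rfl⟩ := E1_gen κ hθ B
  have hT : Fr ((s κ ^ 2) ^ 2) (Fr (s κ ^ 2) (T1 κ)) = (R3 κ + R3 κ) + (R3 κ + R3 κ) := by
    rw [four_R, T1, Fr_pt, Fr_pt]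
    exact pt_congr (by ring) rfl
  have hQ : ∃ e : ℤ, Fr ((s κ ^ 2) ^ 2) (Q2 κ) = e • R3 κ := by
    obtain ⟨y, h, e⟩ := two_R κ
    rw [Q2, Fr_pt]
    rcases pt_eq_or_neg (hb := hs8 κ) (h := (by ring :
      ((s κ ^ 2) ^ 2) ^ 2 + s κ ^ 2 * (s κ ^ 2) ^ 2 = (s κ ^ 2) ^ 3 + ((s κ ^ 2) ^ 2) ^ 2)) (h' := h)
      with e' | e'
    · exact ⟨2, by rw [e', ← e, two_zsmul]⟩
    · exact ⟨-2, by rw [e', ← e, neg_zsmul, two_zsmul]⟩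
  obtain ⟨e, he⟩ := hQ
  refine ⟨i * 4 + e * j2 + j3, j, ?_⟩
  simp only [map_add, map_zsmul, hT, he, Z3, add_zsmul, mul_zsmul']
  simp only [show (4 : ℤ) = 1 + 1 + (1 + 1) by norm_num, add_zsmul, one_zsmul, zsmul_add]
  abel

lemma E3_iso : Nonempty ((E (((s κ ^ 2) ^ 2) ^ 2)).Point ≃+ (ℤ × ZMod 8)) := by
  obtain ⟨e, he⟩ := exists_as (1 : κ)
  have hθ : (RatFunc.C e) ^ 2 + RatFunc.C e = 1 := by
    rw [← map_pow, ← map_add, he, map_one]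
  exact iso_of_gen (Z3 κ hθ) (R3 κ) (order_R κ) (Z_inf κ hθ) (E3_gen κ hθ)

end assembly

section translate

variable {F : Type*} [Field F] [CharP F 2] [DecidableEq F]

/-- The curve `y² + xy + cy = x³ + cx²`. -/
def V (c : F) : WeierstrassCurve.Affine F :=
  { a₁ := 1, a₂ := c, a₃ := c, a₄ := 0, a₆ := 0 }

lemma V_nons {c : F} (hc : c ≠ 0) (x y : F) :
    (V c).Nonsingular x y ↔ y ^ 2 + x * y + c * y = x ^ 3 + c * x ^ 2 := by
  rw [WeierstrassCurve.Affine.nonsingular_iff, WeierstrassCurve.Affine.equation_iff]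
  simp only [V, one_mul, zero_mul, add_zero]
  constructor
  · exact fun h => h.1
  · intro h
    refine ⟨h, ?_⟩
    by_contra! hcon
    obtain ⟨h1, h2⟩ := hcon
    have h2' : (2 : F) = 0 := CharTwo.two_eq_zero
    have e1 : x = c := by linear_combination -h2 + (y + x) * h2'
    subst e1
    have e2 : y = x ^ 2 := by linear_combination h1 + (2 * x ^ 2) * h2'
    rw [e2] at h
    have : x ^ 4 = 0 := by linear_combination h
    exact hc (by simpa using this)

lemma V_slope {c x₁ x₂ y₁ y₂ : F} (hxy : ¬(x₁ = x₂ ∧ y₁ = (V c).negY x₂ y₂))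
    (hxy' : ¬(x₁ + c = x₂ + c ∧ y₁ + c ^ 2 = (E ((c ^ 2) ^ 2)).negY (x₂ + c) (y₂ + c ^ 2))) :
    (E ((c ^ 2) ^ 2)).slope (x₁ + c) (x₂ + c) (y₁ + c ^ 2) (y₂ + c ^ 2) =
      (V c).slope x₁ x₂ y₁ y₂ := by
  have h2' : (2 : F) = 0 := CharTwo.two_eq_zero
  by_cases hx : x₁ = x₂
  · rw [Affine.slope_of_Y_ne hx (fun h => hxy ⟨hx, h⟩),
      Affine.slope_of_Y_ne (by rw [hx]) (fun h => hxy' ⟨by rw [hx], h⟩)]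
    congr 1
    · simp only [E, V]
      linear_combination (c ^ 2 + 2 * x₁ * c) * h2'
    · simp only [Affine.negY, E, V]
      linear_combination c ^ 2 * h2'
  · rw [Affine.slope_of_X_ne hx, Affine.slope_of_X_ne (fun h => hx (add_right_cancel h))]
    congr 1 <;> ring

/-- Translation. -/
def tr {c : F} (hc : c ≠ 0) : (V c).Point →+ (E ((c ^ 2) ^ 2)).Point where
  toFun P := match P with
    | 0 => 0
    | .some x y h => pt (pow_ne_zero 2 (pow_ne_zero 2 hc)) (x + c) (y + c ^ 2) (by
        have := (V_nons hc x y).1 h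
        have h2' : (2 : F) = 0 := CharTwo.two_eq_zero
        linear_combination this + (y * c ^ 2 - x ^ 2 * c - x * c ^ 2) * h2')
  map_zero' := rfl
  map_add' := by
    have h2' : (2 : F) = 0 := CharTwo.two_eq_zero
    rintro (_ | ⟨x₁, y₁, h₁⟩) (_ | ⟨x₂, y₂, h₂⟩)
    any_goals rfl
    by_cases hxy : x₁ = x₂ ∧ y₁ = (V c).negY x₂ y₂
    · rw [Affine.Point.add_of_Y_eq hxy.left hxy.right]
      symm
      apply Affine.Point.add_of_Y_eq
      · rw [hxy.1]
      · rw [hxy.2]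
        simp only [Affine.negY, E, V]
        linear_combination c ^ 2 * h2'
    · have hxy' : ¬(x₁ + c = x₂ + c ∧
          y₁ + c ^ 2 = (E ((c ^ 2) ^ 2)).negY (x₂ + c) (y₂ + c ^ 2)) := by
        rintro ⟨h, h'⟩
        refine hxy ⟨add_right_cancel h, ?_⟩
        simp only [Affine.negY, E, V] at h' ⊢
        linear_combination h' - c ^ 2 * h2'
      rw [Affine.Point.add_some hxy]
      unfold pt
      rw [Affine.Point.add_some hxy']
      have hsl := V_slope hxy hxy'
      simp only [Affine.Point.some.injEq]
      rw [hsl]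
      generalize (V c).slope x₁ x₂ y₁ y₂ = l
      simp only [Affine.addX, Affine.addY, Affine.negAddY, Affine.negY, E, V]
      constructor
      · linear_combination c * h2'
      · linear_combination (c ^ 2 - c * l - c) * h2'

lemma tr_bij {c : F} (hc : c ≠ 0) : Function.Bijective (tr hc) := by
  have h2' : (2 : F) = 0 := CharTwo.two_eq_zero
  constructor
  · rw [injective_iff_map_eq_zero]
    rintro (_ | ⟨x, y, h⟩) hP
    · rfl
    · exact absurd hP (Affine.Point.some_ne_zero _)
  · intro P
    rcases pt_cases (pow_ne_zero 2 (pow_ne_zero 2 hc)) P with rfl | ⟨x, y, h, rfl⟩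
    · exact ⟨0, rfl⟩
    · refine ⟨.some (x + c) (y + c ^ 2) ((V_nons hc _ _).2 ?_), ?_⟩
      · clear * - h h2'
        grind
      · have e1 : x + c + c = x := by linear_combination c * h2'
        have e2 : y + c ^ 2 + c ^ 2 = y := by linear_combination c ^ 2 * h2'
        exact (Affine.Point.some.injEq ..).mpr ⟨e1, e2⟩

end translate

end ECTwo

open scoped Classical in
/-- The group of points of `W : y² + xy + (t²+t)²y = x³ + (t²+t)²x²` over `K = k(t)` is isomorphic to `ℤ ⊕ ℤ/8ℤ`. -/
theorem points_iso_int_prod_zmod_eight : Nonempty (W.Point ≃+ (ℤ × ZMod 8)) := by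
  have hsW : W = ECTwo.V (ECTwo.s k ^ 2) := rfl
  rw [hsW]
  obtain ⟨e⟩ := ECTwo.E3_iso k
  exact ⟨(AddEquiv.ofBijective _ (ECTwo.tr_bij (pow_ne_zero 2 (ECTwo.hs k)))).trans e⟩
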